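/- For n ≥ 2, ∑_{n=2}^N [ n^{-s} - ∫_{n-1}^n x^{-s} dx ] = ∑_{m=1}^∞ ( ∏_{j=1}^m (1-s-j) ) · ((-1)^{m+1}/(m+1)!) · ∑_{n=2}^N n^{-s-m} for any complex s and integer N ≥ 2, where the inner series converges absolutely. -/

import Mathlib

open Finset Complex

/-! Expanding `(x - t) ^ (-s)` in powers of `t` for `|t| < x` and integrating over `t ∈ [0, 1]`
expresses `∫ y in (x - 1)..x, y ^ (-s)` as a series whose leading term is `x ^ (-s)`. Expanding the
integrand, rather than the antiderivative `y ^ (1 - s) / (1 - s)`, treats `s = 1` like every other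
exponent. -/

theorem prod_Icc_one_add_one_sub_eq_factorial_mul_choose {R : Type*} [CommRing R] [BinomialRing R]
    (a : R) (m : ℕ) :
    ∏ j ∈ Icc 1 m, (a + 1 - (j : R)) = (m.factorial : R) * Ring.choose a m := by
  calc ∏ j ∈ Icc 1 m, (a + 1 - (j : R))
      = ∏ i ∈ range m, (a - (i : R)) := by
        rw [range_eq_Ico, ← Ico_add_one_right_eq_Icc, ← zero_add 1, ← prod_Ico_add']
        simp only [Nat.cast_add, Nat.cast_one, add_sub_add_right_eq_sub]
    _ = (descPochhammer ℤ m).smeval a := by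
        rw [← descPochhammer_eval_eq_prod_range, ← Polynomial.aeval_eq_smeval,
          Polynomial.aeval_def, Polynomial.eval₂_eq_eval_map, descPochhammer_map]
    _ = (m.factorial : R) * Ring.choose a m := by
        rw [Ring.descPochhammer_eq_factorial_smul_choose, nsmul_eq_mul]

theorem hasSum_choose_mul_pow (a : ℂ) {z : ℂ} (hz : ‖z‖ < 1) :
    HasSum (fun k : ℕ => Ring.choose a k * z ^ k) ((1 + z) ^ a) := by
  have hz_mem : z ∈ Metric.eball (0 : ℂ) 1 := by
    rw [← ENNReal.ofReal_one, Metric.eball_ofReal]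
    simpa using hz
  simpa [binomialSeries, FormalMultilinearSeries.coeff_ofScalars, mul_comm] using
    (one_add_cpow_hasFPowerSeriesOnBall_zero (a := a)).hasSum hz_mem

theorem hasSum_ofReal_sub_cpow (a : ℂ) {x t : ℝ} (ht : |t| < x) :
    HasSum (fun k : ℕ => t ^ k • ((-1) ^ k * Ring.choose a k * (x : ℂ) ^ (a - k)))
      (((x - t : ℝ) : ℂ) ^ a) := by
  have hx : 0 < x := (abs_nonneg t).trans_lt ht
  have hx_ne : (x : ℂ) ≠ 0 := ofReal_ne_zero.mpr hx.ne'
  have hratio : |t / x| < 1 := by rwa [abs_div, abs_of_pos hx, div_lt_one hx]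
  have hfactor : ((x - t : ℝ) : ℂ) ^ a = (x : ℂ) ^ a * (1 + -((t / x : ℝ) : ℂ)) ^ a := by
    have hone_sub : 0 ≤ 1 - t / x := sub_nonneg.mpr (le_of_abs_le hratio.le)
    rw [← sub_eq_add_neg, ← ofReal_one, ← ofReal_sub, ← mul_cpow_ofReal_nonneg hx.le hone_sub,
      ← ofReal_mul, mul_sub, mul_one, mul_div_cancel₀ t hx.ne']
  rw [hfactor]
  have hz : ‖-((t / x : ℝ) : ℂ)‖ < 1 := by rwa [norm_neg, norm_real, Real.norm_eq_abs]
  refine ((hasSum_choose_mul_pow a hz).mul_left ((x : ℂ) ^ a)).congr_fun fun k => ?_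
  rw [cpow_sub _ _ hx_ne, cpow_natCast, real_smul, neg_pow ((t / x : ℝ) : ℂ), ofReal_div,
    div_pow, ofReal_pow]
  ring

theorem hasSum_integral_of_hasSum_pow_smul {E : Type*} [NormedAddCommGroup E] [NormedSpace ℝ E]
    [CompleteSpace E] {c : ℕ → E} {f : ℝ → E} {r : ℝ} (hc : Summable fun k => ‖r ^ k • c k‖)
    (hf : ∀ t ∈ Set.uIcc 0 r, HasSum (fun k => t ^ k • c k) (f t)) :
    HasSum (fun k : ℕ => (r ^ (k + 1) / (k + 1)) • c k) (∫ t in 0..r, f t) := by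
  have hbound (k : ℕ) {t : ℝ} (ht : t ∈ Set.uIcc 0 r) : ‖t ^ k • c k‖ ≤ ‖r ^ k • c k‖ := by
    have habs : |t| ≤ |r| := by simpa using Set.abs_sub_left_of_mem_uIcc ht
    simp only [norm_smul, norm_pow, Real.norm_eq_abs]
    gcongr
  have hterm (k : ℕ) : ∫ t in 0..r, t ^ k • c k = (r ^ (k + 1) / (k + 1)) • c k := by
    simp [integral_pow]
  simp_rw [← hterm]
  refine intervalIntegral.hasSum_integral_of_dominated_convergence (fun k _ => ‖r ^ k • c k‖)
    (fun k => ?_) (fun k => ?_) ?_ ?_ ?_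
  · exact (by fun_prop : Continuous fun t : ℝ => t ^ k • c k).aestronglyMeasurable
  · exact .of_forall fun t ht => hbound k (Set.uIoc_subset_uIcc ht)
  · exact .of_forall fun _ _ => hc
  · exact intervalIntegrable_const
  · exact .of_forall fun t ht => hf t (Set.uIoc_subset_uIcc ht)

theorem hasSum_integral_ofReal_cpow (a : ℂ) {x h : ℝ} (hh : |h| < x) :
    HasSum
      (fun k : ℕ => (h ^ (k + 1) / (k + 1)) • ((-1) ^ k * Ring.choose a k * (x : ℂ) ^ (a - k)))
      (∫ y in (x - h)..x, (y : ℂ) ^ a) := by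
  have hsubst : ∫ y in (x - h)..x, (y : ℂ) ^ a = ∫ t in 0..h, ((x - t : ℝ) : ℂ) ^ a := by
    rw [intervalIntegral.integral_comp_sub_left (fun y : ℝ => (y : ℂ) ^ a), sub_zero]
  rw [hsubst]
  refine hasSum_integral_of_hasSum_pow_smul (hasSum_ofReal_sub_cpow a hh).summable.norm
    fun t ht => hasSum_ofReal_sub_cpow a ?_
  have habs : |t| ≤ |h| := by simpa using Set.abs_sub_left_of_mem_uIcc ht
  exact habs.trans_lt hh

theorem hasSum_cpow_neg_sub_integral (s : ℂ) {x : ℝ} (hx : 1 < x) :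
    HasSum
      (fun m : ℕ =>
        (∏ j ∈ Icc 1 (m + 1), (1 - s - (j : ℂ))) *
          ((-1) ^ (m + 1 + 1) / ((m + 1 + 1).factorial : ℂ)) * (x : ℂ) ^ (-s - (m + 1)))
      ((x : ℂ) ^ (-s) - ∫ y in (x - 1)..x, (y : ℂ) ^ (-s)) := by
  have hintegral := hasSum_integral_ofReal_cpow (-s) (x := x) (h := 1) (by rwa [abs_one])
  have htail := ((hasSum_nat_add_iff' 1).mpr hintegral).neg
  have hconst : -((∫ y in (x - 1)..x, (y : ℂ) ^ (-s)) - ∑ k ∈ range 1,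
      ((1 : ℝ) ^ (k + 1) / (k + 1)) • ((-1) ^ k * Ring.choose (-s) k * (x : ℂ) ^ (-s - k))) =
      (x : ℂ) ^ (-s) - ∫ y in (x - 1)..x, (y : ℂ) ^ (-s) := by
    simp
  rw [hconst] at htail
  refine htail.congr_fun fun m => ?_
  have hprod := prod_Icc_one_add_one_sub_eq_factorial_mul_choose (-s) (m + 1)
  rw [neg_add_eq_sub] at hprod
  have hfactorial : ((m + 1).factorial : ℂ) ≠ 0 := mod_cast (m + 1).factorial_ne_zero
  have hsucc : (m : ℂ) + 1 + 1 ≠ 0 := mod_cast (m + 1).succ_ne_zero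
  rw [hprod, Nat.factorial_succ (m + 1), real_smul]
  push_cast
  field_simp
  ring

/-- For any complex s and integer N ≥ 2,
∑_{n=2}^N [n^{-s} - ∫_{n-1}^n x^{-s} dx]
  = ∑_{m=1}^∞ (∏_{j=1}^m (1-s-j)) ((-1)^{m+1}/(m+1)!) ∑_{n=2}^N n^{-s-m},
the series on the right converging absolutely. (Here the index `m` runs over `ℕ`
shifted by one, so the term below at `m : ℕ` is the term `m+1` of the series.) -/
theorem binomial_expansion_integral_difference (s : ℂ) (N : ℕ) (hN : 2 ≤ N) :
    HasSum
      (fun m : ℕ =>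
        (∏ j ∈ Icc 1 (m + 1), (1 - s - (j : ℂ))) *
          ((-1) ^ (m + 1 + 1) / ((m + 1 + 1).factorial : ℂ)) *
          ∑ n ∈ Icc 2 N, (n : ℂ) ^ (-s - (m + 1)))
      (∑ n ∈ Icc 2 N,
        ((n : ℂ) ^ (-s) - ∫ x in ((n : ℝ) - 1)..(n : ℝ), (x : ℂ) ^ (-s))) ∧
    Summable
      (fun m : ℕ =>
        ‖(∏ j ∈ Icc 1 (m + 1), (1 - s - (j : ℂ))) *
          ((-1) ^ (m + 1 + 1) / ((m + 1 + 1).factorial : ℂ)) *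
          ∑ n ∈ Icc 2 N, (n : ℂ) ^ (-s - (m + 1))‖) := by
  suffices hseries : HasSum _ _ from ⟨hseries, hseries.summable.norm⟩
  simp_rw [mul_sum]
  refine hasSum_sum fun n hn => ?_
  have hn_gt : (1 : ℝ) < n := mod_cast (mem_Icc.mp hn).1
  simpa only [ofReal_natCast] using hasSum_cpow_neg_sub_integral s hn_gt
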